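/- For any Laman graph on n vertices, the mixed volume of the Newton polytopes of the 2n polynomials in the system {x_1−c_1, y_1−c_2, x_2−(l_{1,2}−c_1), y_2−c_3} ∪ {(x_i−x_j)²+(y_i−y_j)²−l_{i,j}² : [v_i,v_j] ∈ E∖{[v_1,v_2]}} equals exactly 4^{n−2}. -/

import Mathlib

open MeasureTheory Pointwise

/-- Mixed volume of `k` convex bodies in `ℝ^k`, via the standard
inclusion-exclusion formula over Minkowski sums. -/
noncomputable def mixedVolume {k : ℕ} (P : Fin k → Set (Fin k → ℝ)) : ℝ :=
  ∑ S ∈ Finset.univ.powerset.filter (fun S : Finset (Fin k) => S.Nonempty),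
    (-1 : ℝ) ^ (k - S.card) * (volume (∑ i ∈ S, P i)).toReal

/-- A polytope is the convex hull of finitely many points. -/
def IsPolytope {E : Type*} [AddCommMonoid E] [Module ℝ E] (P : Set E) : Prop :=
  ∃ V : Finset E, P = convexHull ℝ (V : Set E)


open scoped Classical

/-- Index of the variable `xᵢ` in the coordinate order `(x₁,y₁,…,x_n,y_n)`. -/
def xIdx {n : ℕ} (u : Fin n) : Fin (2 * n) := ⟨2 * (u : ℕ), by have := u.isLt; omega⟩

/-- Index of the variable `yᵢ` in the coordinate order `(x₁,y₁,…,x_n,y_n)`. -/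
def yIdx {n : ℕ} (u : Fin n) : Fin (2 * n) := ⟨2 * (u : ℕ) + 1, by have := u.isLt; omega⟩

/-- The Newton polytope of the edge equation
`(xᵤ−x_v)² + (yᵤ−y_v)² − l² = 0`: the convex hull of the exponent vectors of
the monomials `xᵤ², xᵤx_v, x_v², yᵤ², yᵤy_v, y_v², 1`. -/
def edgeNP {n : ℕ} (e : Sym2 (Fin n)) : Set (Fin (2 * n) → ℝ) :=
  convexHull ℝ {p | ∃ u v : Fin n, e = s(u, v) ∧
    (p = 0 ∨
     p = 2 • (Pi.single (xIdx u) 1 : Fin (2 * n) → ℝ) ∨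
     p = (Pi.single (xIdx u) 1 : Fin (2 * n) → ℝ) + Pi.single (xIdx v) 1 ∨
     p = 2 • (Pi.single (xIdx v) 1 : Fin (2 * n) → ℝ) ∨
     p = 2 • (Pi.single (yIdx u) 1 : Fin (2 * n) → ℝ) ∨
     p = (Pi.single (yIdx u) 1 : Fin (2 * n) → ℝ) + Pi.single (yIdx v) 1 ∨
     p = 2 • (Pi.single (yIdx v) 1 : Fin (2 * n) → ℝ))}

/-- The Laman property for a simple graph on `n` vertices: it has `2n − 3`
edges and every subset of `k ≥ 2` vertices spans at most `2k − 3` edges. -/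
def LamanGraph {n : ℕ} (G : SimpleGraph (Fin n)) : Prop :=
  G.edgeFinset.card = 2 * n - 3 ∧
  ∀ S : Finset (Fin n), 2 ≤ S.card →
    (G.edgeFinset.filter fun e => ∀ v ∈ e, v ∈ S).card ≤ 2 * S.card - 3

/-!
For a polytope with weighted vertices, the gradient of the log-partition function
`x ↦ log ∑ w_p exp ⟨p, x⟩` has range squeezed between the interior of the polytope and the polytope
itself; its Jacobian is the covariance matrix of the Gibbs distribution on the vertices, and it is
injective where this matrix is nonsingular. The same holds for sums of such gradients. Volumes of
Minkowski sums are therefore integrals of determinants of sums of covariances, and the mixed volume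
is the integral of their mixed discriminant, which is nonnegative since covariances are positive
semidefinite. Letting the weights of superfluous vertices tend to zero, Fatou's lemma shows that
mixed volumes are monotone under inclusion.

In the Laman system, every Newton polytope lies in `c • Δ`, where `Δ` is the corner simplex and
`c = 1` or `2` is the degree of the polynomial. Hall's theorem, whose hypothesis is the Laman
sparsity condition, assigns the polynomials distinct coordinates `j` so that each Newton polytope
contains `c • [0, e_j]`. Both families of bounds have mixed volume `∏ c = 2 ^ (2 * n - 4)`.
-/

section Polarization

variable {ι R V W : Type*} [Fintype ι] [CommRing R] [AddCommGroup V] [Module R V]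
  [AddCommGroup W] [Module R W]

theorem sum_neg_one_pow_smul_map_sum [DecidableEq ι] (m : MultilinearMap R (fun _ : ι => V) W)
    (v : ι → V) :
    ∑ S : Finset ι, (-1 : R) ^ (Fintype.card ι - S.card) • m (fun _ => ∑ i ∈ S, v i) =
      ∑ σ : Equiv.Perm ι, m (v ∘ σ) := by
  have avoiding (T : Finset ι) :
      T.inf (fun i => ({f | ∀ j, f j ≠ i} : Finset (ι → ι))) =
        Fintype.piFinset fun _ => Tᶜ := by
    ext f
    simp only [Finset.mem_inf, Finset.mem_filter_univ, Fintype.mem_piFinset, Finset.mem_compl]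
    exact ⟨fun h j hj => h _ hj j rfl, fun h i hi j hj => h j (hj ▸ hi)⟩
  have bijective_eq : (Finset.univ.inf fun i => ({f | ∀ j, f j ≠ i} : Finset (ι → ι))ᶜ) =
      ({f | Function.Bijective f} : Finset (ι → ι)) := by
    ext f
    rw [Finset.mem_filter_univ, ← Finite.surjective_iff_bijective]
    simp [Finset.mem_inf, Function.Surjective]
  calc ∑ S : Finset ι, (-1 : R) ^ (Fintype.card ι - S.card) • m (fun _ => ∑ i ∈ S, v i)
      = ∑ T : Finset ι, (-1 : ℤ) ^ T.card •
          ∑ f ∈ T.inf (fun i => ({f | ∀ j, f j ≠ i} : Finset (ι → ι))), m (v ∘ f) := by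
        refine Fintype.sum_equiv compl_involutive.toPerm _ _ fun S => ?_
        rw [Function.Involutive.coe_toPerm, avoiding, compl_compl, Finset.card_compl,
          ← Int.cast_smul_eq_zsmul R, MultilinearMap.map_sum_finset]
        push_cast
        rfl
    _ = ∑ f with Function.Bijective f, m (v ∘ f) := by
        rw [← bijective_eq, Finset.inclusion_exclusion_sum_inf_compl, Finset.powerset_univ]
    _ = ∑ σ : Equiv.Perm ι, m (v ∘ σ) :=
        Finset.sum_bij (fun f hf => Equiv.ofBijective f (Finset.mem_filter.1 hf).2)
          (fun _ _ => Finset.mem_univ _) (fun _ _ _ _ h => by injection h)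
          (fun σ _ => ⟨σ, by simp, DFunLike.coe_injective rfl⟩) fun _ _ => rfl

theorem sum_neg_one_pow_mul_sum_pow (c : ι → R) :
    ∑ S : Finset ι, (-1) ^ (Fintype.card ι - S.card) * (∑ i ∈ S, c i) ^ Fintype.card ι =
      (Fintype.card ι).factorial * ∏ i, c i := by
  classical
  have h := sum_neg_one_pow_smul_map_sum (MultilinearMap.mkPiAlgebra R ι R) c
  simpa [Equiv.prod_comp, Fintype.card_perm] using h

end Polarization

section MixedDiscriminant

variable {ι : Type*} [Fintype ι] [DecidableEq ι]

/-- The mixed discriminant of `M`, normalised so that it equals `(card ι)! * det A` when all the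
`M i` are equal to `A`. The inclusion-exclusion form mirrors that of `mixedVolume`. -/
noncomputable def mixedDiscriminant (M : ι → Matrix ι ι ℝ) : ℝ :=
  ∑ S : Finset ι, (-1) ^ (Fintype.card ι - S.card) * (∑ i ∈ S, M i).det

theorem mixedDiscriminant_eq_sum_perm (M : ι → Matrix ι ι ℝ) :
    mixedDiscriminant M = ∑ σ : Equiv.Perm ι, (Matrix.of fun r => M (σ r) r).det :=
  sum_neg_one_pow_smul_map_sum
    (Matrix.detRowAlternating.toMultilinearMap.compLinearMap fun r : ι =>
      (LinearMap.proj r : Matrix ι ι ℝ →ₗ[ℝ] ι → ℝ)) M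

theorem continuous_mixedDiscriminant :
    Continuous (mixedDiscriminant : (ι → Matrix ι ι ℝ) → ℝ) := by
  unfold mixedDiscriminant
  fun_prop

theorem mixedDiscriminant_sum {κ : ι → Type*} [∀ i, Fintype (κ i)]
    (M : ∀ i, κ i → Matrix ι ι ℝ) :
    mixedDiscriminant (fun i => ∑ a, M i a) =
      ∑ f : ∀ i, κ i, mixedDiscriminant fun i => M i (f i) := by
  let detRows : MultilinearMap ℝ (fun _ : ι => Matrix ι ι ℝ) ℝ :=
    Matrix.detRowAlternating.toMultilinearMap.compLinearMap fun r => LinearMap.proj r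
  have apply_eq (N : ι → Matrix ι ι ℝ) :
      mixedDiscriminant N = (∑ σ : Equiv.Perm ι, detRows.domDomCongr σ) N := by
    rw [mixedDiscriminant_eq_sum_perm, sum_apply]
    rfl
  simp only [apply_eq]
  exact MultilinearMap.map_sum _ _

/-- `∑ i ∈ S, b i (b i)ᵀ` is singular unless `S` is everything, so only one term survives. -/
theorem mixedDiscriminant_vecMulVec (b : Matrix ι ι ℝ) :
    mixedDiscriminant (fun i => Matrix.vecMulVec (b i) (b i)) = b.det ^ 2 := by
  have gram (S : Finset ι) : ∑ i ∈ S, Matrix.vecMulVec (b i) (b i) =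
      b.transpose * Matrix.diagonal (fun i => if i ∈ S then 1 else 0) * b := by
    ext r c
    rw [Matrix.mul_apply]
    simp [Matrix.mul_diagonal, Matrix.sum_apply, Matrix.vecMulVec_apply]
  unfold mixedDiscriminant
  rw [Finset.sum_eq_single_of_mem Finset.univ (Finset.mem_univ _)]
  · simp [gram, sq]
  · intro S _ hS
    obtain ⟨i, hi⟩ : ∃ i, i ∉ S := by simpa [Finset.eq_univ_iff_forall] using hS
    simp [gram, Finset.prod_eq_zero (Finset.mem_univ i), hi]

theorem mixedDiscriminant_nonneg {M : ι → Matrix ι ι ℝ} (hM : ∀ i, (M i).PosSemidef) :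
    0 ≤ mixedDiscriminant M := by
  choose m v hv using fun i => Matrix.posSemidef_iff_eq_sum_vecMulVec.1 (hM i)
  obtain rfl : M = fun i => ∑ a, Matrix.vecMulVec (v i a) (v i a) := funext hv
  rw [mixedDiscriminant_sum]
  refine Finset.sum_nonneg fun f _ => ?_
  exact (mixedDiscriminant_vecMulVec (Matrix.of fun i => v i (f i))).symm ▸ sq_nonneg _

end MixedDiscriminant

section GradientImage

open scoped Matrix

variable {ι : Type*} [Fintype ι]

/-- `g` is the gradient of `f` with respect to the standard dot product. -/
def HasGradient (f : (ι → ℝ) → ℝ) (g : (ι → ℝ) → ι → ℝ) : Prop :=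
  ∀ x, HasFDerivAt f (LinearMap.toContinuousLinearMap (dotProductBilin ℝ ℝ (g x))) x

/-- `H` is the Jacobian matrix of `g`. -/
def HasJacobian [DecidableEq ι] (g : (ι → ℝ) → ι → ℝ) (H : (ι → ℝ) → Matrix ι ι ℝ) : Prop :=
  ∀ x, HasFDerivAt g (LinearMap.toContinuousLinearMap (Matrix.toLin' (H x))) x

theorem HasGradient.sum {κ : Type*} {S : Finset κ} {f : κ → (ι → ℝ) → ℝ}
    {g : κ → (ι → ℝ) → ι → ℝ} (h : ∀ i ∈ S, HasGradient (f i) (g i)) :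
    HasGradient (fun x => ∑ i ∈ S, f i x) fun x => ∑ i ∈ S, g i x := fun x => by
  simpa only [map_sum] using HasFDerivAt.fun_sum fun i hi => h i hi x

theorem HasJacobian.sum [DecidableEq ι] {κ : Type*} {S : Finset κ} {g : κ → (ι → ℝ) → ι → ℝ}
    {H : κ → (ι → ℝ) → Matrix ι ι ℝ} (h : ∀ i ∈ S, HasJacobian (g i) (H i)) :
    HasJacobian (fun x => ∑ i ∈ S, g i x) fun x => ∑ i ∈ S, H i x := fun x => by
  simpa only [map_sum] using HasFDerivAt.fun_sum fun i hi => h i hi x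

variable {f : (ι → ℝ) → ℝ} {g : (ι → ℝ) → ι → ℝ} {H : (ι → ℝ) → Matrix ι ι ℝ} {K : Set (ι → ℝ)}

/-- For `y` interior to `K`, the support bound makes `f x - y ⬝ᵥ x` coercive, and `g` takes the
value `y` at any minimiser. -/
theorem interior_subset_range_gradient (hf : HasGradient f g)
    (hK : ∃ C, ∀ a ∈ K, ∀ x, a ⬝ᵥ x ≤ f x + C) : interior K ⊆ Set.range g := by
  intro y hy
  obtain ⟨C, hC⟩ := hK
  obtain ⟨δ, hδ, hball⟩ := Metric.nhds_basis_closedBall.mem_iff.1 (mem_interior_iff_mem_nhds.1 hy)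
  have lower (x : ι → ℝ) : δ * ‖x‖ - C ≤ f x - y ⬝ᵥ x := by
    let a : ι → ℝ := y + δ • fun i => (SignType.sign (x i) : ℝ)
    have ha : a ∈ K := by
      refine hball (mem_closedBall_iff_norm.2 ?_)
      rw [add_sub_cancel_left, norm_smul, Real.norm_of_nonneg hδ.le]
      refine mul_le_of_le_one_right hδ.le ((pi_norm_le_iff_of_nonneg zero_le_one).2 fun i => ?_)
      cases SignType.sign (x i) <;> simp
    have hax : a ⬝ᵥ x = y ⬝ᵥ x + δ * ∑ i, |x i| := by
      rw [add_dotProduct, smul_dotProduct]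
      simp [dotProduct, sign_mul_self]
    have hnorm : ‖x‖ ≤ ∑ i, |x i| := pi_norm_le_iff_of_nonneg (by positivity) |>.2 fun i =>
      Finset.single_le_sum (f := fun i => |x i|) (fun _ _ => abs_nonneg _) (Finset.mem_univ i)
    have := hC a ha x
    nlinarith
  have hderiv (x : ι → ℝ) : HasFDerivAt (fun x => f x - y ⬝ᵥ x)
      (LinearMap.toContinuousLinearMap (dotProductBilin ℝ ℝ (g x) - dotProductBilin ℝ ℝ y)) x :=
    (hf x).sub (LinearMap.toContinuousLinearMap (dotProductBilin ℝ ℝ y)).hasFDerivAt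
  have hcoercive : Filter.Tendsto (fun x => f x - y ⬝ᵥ x) (Filter.cocompact _) Filter.atTop :=
    Filter.tendsto_atTop_mono lower <| Filter.tendsto_atTop_add_const_right _ _ <|
      (tendsto_norm_cocompact_atTop (E := ι → ℝ)).const_mul_atTop hδ
  obtain ⟨x, hx⟩ := (continuous_iff_continuousAt.2 fun x => (hderiv x).continuousAt
    ).exists_forall_le hcoercive
  refine ⟨x, dotProduct_eq _ _ fun v => sub_eq_zero.1 ?_⟩
  have hmin : IsLocalMin (fun x => f x - y ⬝ᵥ x) x := Filter.Eventually.of_forall hx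
  exact DFunLike.congr_fun (hmin.hasFDerivAt_eq_zero (hderiv x)) v

variable [DecidableEq ι]

/-- Along the segment from `x` to `y` the function `t ↦ g (x + t (y - x)) ⬝ᵥ (y - x)` is monotone
with equal end values, so its derivative at `0` vanishes. -/
theorem eq_of_gradient_eq (hg : HasJacobian g H) (hH : ∀ x, (H x).PosSemidef) {x y : ι → ℝ}
    (hx : (H x).det ≠ 0) (hxy : g x = g y) : x = y := by
  set v := y - x
  let φ : ℝ → ℝ := fun t => g (x + t • v) ⬝ᵥ v
  have hφ (t : ℝ) : HasDerivAt φ (v ⬝ᵥ H (x + t • v) *ᵥ v) t := by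
    have hline : HasDerivAt (fun t : ℝ => x + t • v) v t := by
      simpa using ((hasDerivAt_id t).smul_const v).const_add x
    have hdot := (LinearMap.toContinuousLinearMap (dotProductBilin ℝ ℝ v)
      ).hasFDerivAt.comp_hasDerivAt t ((hg _).comp_hasDerivAt t hline)
    simpa [Function.comp_def, φ, dotProduct_comm] using hdot
  have hmono : Monotone φ := monotone_of_hasDerivAt_nonneg hφ fun t => by
    simpa using (hH (x + t • v)).dotProduct_mulVec_nonneg v
  have hends : φ 0 = φ 1 := by simp [φ, v, hxy]
  have hconst : Set.EqOn φ (fun _ => φ 0) (Set.Icc 0 1) := fun t ht =>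
    le_antisymm (hends ▸ hmono ht.2) (hmono ht.1)
  have hzero : v ⬝ᵥ H x *ᵥ v = 0 := by
    have h0 : (0 : ℝ) ∈ Set.Icc (0 : ℝ) 1 := by simp
    simpa using (uniqueDiffOn_Icc_zero_one 0 h0).eq_deriv _ (hφ 0).hasDerivWithinAt
      ((hasDerivWithinAt_const 0 _ (φ 0)).congr hconst rfl)
  have hker : H x *ᵥ v = 0 := ((hH x).dotProduct_mulVec_zero_iff v).1 (by simpa using hzero)
  exact (sub_eq_zero.1 (Matrix.eq_zero_of_mulVec_eq_zero hx hker)).symm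

/-- The critical values of `g` are negligible by Sard's theorem, and `g` is injective elsewhere. -/
theorem volume_eq_lintegral_det (hf : HasGradient f g) (hg : HasJacobian g H)
    (hH : ∀ x, (H x).PosSemidef) (hconv : Convex ℝ K) (hgK : ∀ x, g x ∈ K)
    (hK : ∃ C, ∀ a ∈ K, ∀ x, a ⬝ᵥ x ≤ f x + C) :
    volume K = ∫⁻ x, ENNReal.ofReal (H x).det := by
  let R : Set (ι → ℝ) := {x | (H x).det ≠ 0}
  have hdet (x : ι → ℝ) : (LinearMap.toContinuousLinearMap (Matrix.toLin' (H x))).det =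
      (H x).det := by simp
  have hR : MeasurableSet R := by
    have := ContinuousLinearMap.continuous_det.measurable.comp (measurable_fderiv ℝ g)
    simp only [Function.comp_def, (hg _).fderiv, hdet] at this
    exact this (measurableSet_singleton 0).compl
  have hcrit : volume (g '' Rᶜ) = 0 :=
    addHaar_image_eq_zero_of_det_fderivWithin_eq_zero volume
      (fun x _ => (hg x).hasFDerivWithinAt) fun x hx => (hdet x).trans (not_not.1 hx)
  have himage : volume (g '' R) = ∫⁻ x, ENNReal.ofReal (H x).det := by
    rw [← lintegral_abs_det_fderiv_eq_addHaar_image volume hR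
      (fun x _ => (hg x).hasFDerivWithinAt) fun x hx y _ => eq_of_gradient_eq hg hH hx]
    simp only [hdet, fun x => abs_of_nonneg (hH x).det_nonneg]
    exact setLIntegral_eq_of_support_subset fun x => by simpa [R] using ne_of_gt
  refine himage ▸ le_antisymm ?_ (measure_mono (Set.image_subset_iff.2 fun x _ => hgK x))
  calc volume K = volume (interior K) :=
        (measure_congr (interior_ae_eq_of_null_frontier (hconv.addHaar_frontier volume))).symm
    _ ≤ volume (g '' R ∪ g '' Rᶜ) := by
        rw [← Set.image_union, Set.union_compl_self, Set.image_univ]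
        exact measure_mono (interior_subset_range_gradient hf hK)
    _ ≤ volume (g '' R) + volume (g '' Rᶜ) := measure_union_le _ _
    _ = volume (g '' R) := by rw [hcrit, add_zero]

end GradientImage

section Gibbs

open scoped Matrix

variable {ι : Type*} [Fintype ι]

/-- The exponential sum `∑ w(p) exp(p ⬝ᵥ x)` over the exponents `p ∈ V`, whose logarithm is a convex
potential for the convex hull of `V`. -/
noncomputable def partitionFunction (V : Finset (ι → ℝ)) (w : (ι → ℝ) → ℝ) (x : ι → ℝ) : ℝ :=
  ∑ p ∈ V, w p * Real.exp (p ⬝ᵥ x)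

/-- The probability of `p` in the Gibbs distribution on `V` with weights `w` and field `x`. -/
noncomputable def gibbsProb (V : Finset (ι → ℝ)) (w : (ι → ℝ) → ℝ) (x p : ι → ℝ) : ℝ :=
  w p * Real.exp (p ⬝ᵥ x) / partitionFunction V w x

/-- The mean of the Gibbs distribution on `V`. -/
noncomputable def gibbsMean (V : Finset (ι → ℝ)) (w : (ι → ℝ) → ℝ) (x : ι → ℝ) : ι → ℝ :=
  ∑ p ∈ V, gibbsProb V w x p • p

/-- The covariance matrix of the Gibbs distribution on `V`. -/
noncomputable def gibbsCov (V : Finset (ι → ℝ)) (w : (ι → ℝ) → ℝ) (x : ι → ℝ) : Matrix ι ι ℝ :=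
  ∑ p ∈ V, gibbsProb V w x p • Matrix.vecMulVec (p - gibbsMean V w x) (p - gibbsMean V w x)

variable {V : Finset (ι → ℝ)} {w : (ι → ℝ) → ℝ}

theorem partitionFunction_pos (hV : V.Nonempty) (hw : ∀ p ∈ V, 0 < w p) (x : ι → ℝ) :
    0 < partitionFunction V w x :=
  Finset.sum_pos (fun p hp => mul_pos (hw p hp) (Real.exp_pos _)) hV

theorem gibbsProb_nonneg (hw : ∀ p ∈ V, 0 < w p) (x : ι → ℝ) {p : ι → ℝ} (hp : p ∈ V) :
    0 ≤ gibbsProb V w x p :=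
  div_nonneg (mul_nonneg (hw p hp).le (Real.exp_pos _).le)
    (partitionFunction_pos ⟨p, hp⟩ hw x).le

theorem sum_gibbsProb (hV : V.Nonempty) (hw : ∀ p ∈ V, 0 < w p) (x : ι → ℝ) :
    ∑ p ∈ V, gibbsProb V w x p = 1 := by
  simp only [gibbsProb, ← Finset.sum_div]
  exact div_self (partitionFunction_pos hV hw x).ne'

theorem gibbsMean_mem_convexHull (hV : V.Nonempty) (hw : ∀ p ∈ V, 0 < w p) (x : ι → ℝ) :
    gibbsMean V w x ∈ convexHull ℝ (V : Set (ι → ℝ)) :=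
  (convex_convexHull ℝ _).sum_mem (fun _ hp => gibbsProb_nonneg hw x hp) (sum_gibbsProb hV hw x)
    fun _ hp => subset_convexHull ℝ _ hp

theorem posSemidef_gibbsCov (hw : ∀ p ∈ V, 0 < w p) (x : ι → ℝ) :
    (gibbsCov V w x).PosSemidef :=
  Matrix.posSemidef_sum _ fun p hp => by
    simpa using (Matrix.posSemidef_vecMulVec_self_star (p - gibbsMean V w x)).smul
      (gibbsProb_nonneg hw x hp)

theorem dotProduct_le_log_partitionFunction (hw : ∀ p ∈ V, 0 < w p) {a : ι → ℝ}
    (ha : a ∈ convexHull ℝ (V : Set (ι → ℝ))) (x : ι → ℝ) :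
    a ⬝ᵥ x ≤ Real.log (partitionFunction V w x) + ∑ p ∈ V, |Real.log (w p)| := by
  suffices h : convexHull ℝ (V : Set (ι → ℝ)) ⊆
      {a | a ⬝ᵥ x ≤ Real.log (partitionFunction V w x) + ∑ p ∈ V, |Real.log (w p)|} from h ha
  refine convexHull_min (fun p hp => ?_)
    (convex_halfSpace_le ((dotProductBilin ℝ ℝ).flip x).isLinear _)
  have hterm : w p * Real.exp (p ⬝ᵥ x) ≤ partitionFunction V w x :=
    Finset.single_le_sum (f := fun p => w p * Real.exp (p ⬝ᵥ x))
      (fun q hq => mul_nonneg (hw q hq).le (Real.exp_pos _).le) hp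
  have hlog := Real.log_le_log (mul_pos (hw p hp) (Real.exp_pos _)) hterm
  rw [Real.log_mul (hw p hp).ne' (Real.exp_pos _).ne', Real.log_exp] at hlog
  have habs : |Real.log (w p)| ≤ ∑ q ∈ V, |Real.log (w q)| :=
    Finset.single_le_sum (f := fun q => |Real.log (w q)|) (fun _ _ => abs_nonneg _) hp
  simp only [Set.mem_ofPred_eq]
  linarith [neg_abs_le (Real.log (w p))]

theorem hasFDerivAt_exp_dotProduct (p x : ι → ℝ) :
    HasFDerivAt (fun x => Real.exp (p ⬝ᵥ x))
      (Real.exp (p ⬝ᵥ x) • LinearMap.toContinuousLinearMap (dotProductBilin ℝ ℝ p)) x :=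
  (LinearMap.toContinuousLinearMap (dotProductBilin ℝ ℝ p)).hasFDerivAt.exp

theorem hasGradient_log_partitionFunction (hV : V.Nonempty) (hw : ∀ p ∈ V, 0 < w p) :
    HasGradient (fun x => Real.log (partitionFunction V w x)) (gibbsMean V w) := by
  intro x
  have hZ : HasFDerivAt (partitionFunction V w) _ x :=
    HasFDerivAt.fun_sum fun p _ => (hasFDerivAt_exp_dotProduct p x).const_mul (w p)
  refine (hZ.log (partitionFunction_pos hV hw x).ne').congr_fderiv
    (ContinuousLinearMap.ext fun v => ?_)
  simp [gibbsMean, gibbsProb, Finset.mul_sum, div_eq_inv_mul, mul_assoc]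

theorem hasFDerivAt_gibbsProb (hV : V.Nonempty) (hw : ∀ p ∈ V, 0 < w p) (x p : ι → ℝ) :
    HasFDerivAt (fun x => gibbsProb V w x p) (gibbsProb V w x p •
      LinearMap.toContinuousLinearMap (dotProductBilin ℝ ℝ (p - gibbsMean V w x))) x := by
  have hZ (x : ι → ℝ) := partitionFunction_pos hV hw x
  have hexp (x : ι → ℝ) : gibbsProb V w x p =
      w p * Real.exp (p ⬝ᵥ x - Real.log (partitionFunction V w x)) := by
    rw [Real.exp_sub, Real.exp_log (hZ x), gibbsProb, mul_div_assoc]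
  simp only [hexp]
  refine (((LinearMap.toContinuousLinearMap (dotProductBilin ℝ ℝ p)).hasFDerivAt.sub
    (hasGradient_log_partitionFunction hV hw x)).exp.const_mul (w p)).congr_fderiv
    (ContinuousLinearMap.ext fun v => ?_)
  simp [mul_assoc]

theorem continuous_gibbsCov (hV : V.Nonempty) (hw : ∀ p ∈ V, 0 < w p) :
    Continuous (gibbsCov V w) := by
  have hprob (p : ι → ℝ) : Continuous fun x => gibbsProb V w x p :=
    continuous_iff_continuousAt.2 fun x => (hasFDerivAt_gibbsProb hV hw x p).continuousAt
  unfold gibbsCov gibbsMean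
  fun_prop

theorem tendsto_gibbsCov {α : Type*} {l : Filter α} {A B : Finset (ι → ℝ)} (hAB : A ⊆ B)
    {w : α → (ι → ℝ) → ℝ} {u : (ι → ℝ) → ℝ} (hw : ∀ p ∈ B, l.Tendsto (w · p) (nhds (u p)))
    (hA : A.Nonempty) (hu : ∀ p ∈ A, 0 < u p) (hu0 : ∀ p ∈ B, p ∉ A → u p = 0) (x : ι → ℝ) :
    l.Tendsto (fun a => gibbsCov B (w a) x) (nhds (gibbsCov A u x)) := by
  have hZ : l.Tendsto (fun a => partitionFunction B (w a) x) (nhds (partitionFunction A u x)) := by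
    unfold partitionFunction
    rw [Finset.sum_subset hAB fun p hp hpA => by rw [hu0 p hp hpA, zero_mul]]
    exact tendsto_finsetSum _ fun p hp => (hw p hp).mul_const _
  have hprob (p) (hp : p ∈ B) :
      l.Tendsto (fun a => gibbsProb B (w a) x p) (nhds (gibbsProb A u x p)) :=
    ((hw p hp).mul_const _).div hZ (partitionFunction_pos hA hu x).ne'
  have hprob0 (p) (hp : p ∈ B) (hpA : p ∉ A) : gibbsProb A u x p = 0 := by
    rw [gibbsProb, hu0 p hp hpA, zero_mul, zero_div]
  have hmean : l.Tendsto (fun a => gibbsMean B (w a) x) (nhds (gibbsMean A u x)) := by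
    rw [gibbsMean, Finset.sum_subset hAB fun p hp hpA => by rw [hprob0 p hp hpA, zero_smul]]
    exact tendsto_finsetSum _ fun p hp => (hprob p hp).smul_const p
  rw [gibbsCov, Finset.sum_subset hAB fun p hp hpA => by rw [hprob0 p hp hpA, zero_smul]]
  refine tendsto_finsetSum _ fun p hp => (hprob p hp).smul ?_
  have hcont : Continuous fun m : ι → ℝ => Matrix.vecMulVec (p - m) (p - m) := by fun_prop
  exact (hcont.tendsto _).comp hmean

variable [DecidableEq ι]

theorem hasJacobian_gibbsMean (hV : V.Nonempty) (hw : ∀ p ∈ V, 0 < w p) :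
    HasJacobian (gibbsMean V w) (gibbsCov V w) := by
  intro x
  have hmean : HasFDerivAt (gibbsMean V w) _ x :=
    HasFDerivAt.fun_sum fun p _ => (hasFDerivAt_gibbsProb hV hw x p).smul_const p
  refine hmean.congr_fderiv (ContinuousLinearMap.ext fun v => ?_)
  set m := gibbsMean V w x
  have hcentred : ∑ p ∈ V, gibbsProb V w x p * (p - m) ⬝ᵥ v = 0 := by
    have : ∑ p ∈ V, gibbsProb V w x p • (p - m) = 0 := by
      simp only [smul_sub, Finset.sum_sub_distrib, ← Finset.sum_smul, sum_gibbsProb hV hw, one_smul]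
      exact sub_self _
    simpa [sum_dotProduct, smul_dotProduct] using congrArg (· ⬝ᵥ v) this
  calc _ = ∑ p ∈ V, (gibbsProb V w x p * (p - m) ⬝ᵥ v) • p := by simp
    _ = ∑ p ∈ V, (gibbsProb V w x p * (p - m) ⬝ᵥ v) • (p - m) := by
        simp only [smul_sub, Finset.sum_sub_distrib, ← Finset.sum_smul, hcentred, zero_smul,
          sub_zero]
    _ = Matrix.toLin' (gibbsCov V w x) v := by
        simp only [gibbsCov, Matrix.toLin'_apply, Matrix.sum_mulVec, Matrix.smul_mulVec,
          Matrix.vecMulVec_mulVec, op_smul_eq_smul, mul_smul, m]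

end Gibbs

section MixedVolume

variable {ι κ : Type*} [Fintype ι]

theorem volume_sum_convexHull_lt_top (V : κ → Finset (ι → ℝ)) (S : Finset κ) :
    volume (∑ i ∈ S, convexHull ℝ (V i : Set (ι → ℝ))) < ⊤ := by
  classical
  rw [← convexHull_sum, ← Finset.coe_sum]
  exact (Finset.finite_toSet _).isCompact_convexHull ℝ |>.measure_lt_top

variable [DecidableEq ι]

theorem volume_sum_convexHull {V : κ → Finset (ι → ℝ)} {w : κ → (ι → ℝ) → ℝ}
    (hV : ∀ i, (V i).Nonempty) (hw : ∀ i, ∀ p ∈ V i, 0 < w i p) (S : Finset κ) :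
    volume (∑ i ∈ S, convexHull ℝ (V i : Set (ι → ℝ))) =
      ∫⁻ x, ENNReal.ofReal (∑ i ∈ S, gibbsCov (V i) (w i) x).det := by
  refine volume_eq_lintegral_det
    (.sum fun i _ => hasGradient_log_partitionFunction (hV i) (hw i))
    (.sum fun i _ => hasJacobian_gibbsMean (hV i) (hw i))
    (fun x => Matrix.posSemidef_sum _ fun i _ => posSemidef_gibbsCov (hw i) x)
    (convex_sum _ fun i _ => convex_convexHull ℝ _)
    (fun x => Set.finsetSum_mem_finsetSum _ _ _ fun i _ => gibbsMean_mem_convexHull (hV i) (hw i) x)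
    ⟨∑ i ∈ S, ∑ p ∈ V i, |Real.log (w i p)|, fun a ha x => ?_⟩
  obtain ⟨b, hb, rfl⟩ := (Set.mem_finsetSum _ _ _).1 ha
  rw [sum_dotProduct, ← Finset.sum_add_distrib]
  exact Finset.sum_le_sum fun i hi => dotProduct_le_log_partitionFunction (hw i) (hb hi) x

theorem integrable_det_sum_gibbsCov {V : κ → Finset (ι → ℝ)} {w : κ → (ι → ℝ) → ℝ}
    (hV : ∀ i, (V i).Nonempty) (hw : ∀ i, ∀ p ∈ V i, 0 < w i p) (S : Finset κ) :
    Integrable fun x => (∑ i ∈ S, gibbsCov (V i) (w i) x).det := by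
  have hcont : Continuous fun x => (∑ i ∈ S, gibbsCov (V i) (w i) x).det := by
    have := fun i => continuous_gibbsCov (hV i) (hw i)
    fun_prop
  refine ⟨hcont.aestronglyMeasurable, ?_⟩
  rw [hasFiniteIntegral_iff_ofReal (ae_of_all _ fun x =>
    (Matrix.posSemidef_sum _ fun i _ => posSemidef_gibbsCov (hw i) x).det_nonneg),
    ← volume_sum_convexHull hV hw]
  exact volume_sum_convexHull_lt_top V S

variable {k : ℕ}

/-- For `k = 0` the right-hand side is `1`, whereas `mixedVolume` skips the empty set and is `0`. -/
theorem mixedVolume_eq_sum [NeZero k] (P : Fin k → Set (Fin k → ℝ)) :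
    mixedVolume P =
      ∑ S : Finset (Fin k), (-1) ^ (k - S.card) * (volume (∑ i ∈ S, P i)).toReal := by
  have : Nonempty (Fin k) := ⟨0⟩
  refine Finset.sum_subset (Finset.subset_univ _) fun S _ hS => ?_
  obtain rfl : S = ∅ := by simpa using hS
  simp [← Set.singleton_zero]

variable {V : Fin k → Finset (Fin k → ℝ)} {w : Fin k → (Fin k → ℝ) → ℝ}

theorem integrable_mixedDiscriminant_gibbsCov (hV : ∀ i, (V i).Nonempty)
    (hw : ∀ i, ∀ p ∈ V i, 0 < w i p) :
    Integrable fun x => mixedDiscriminant fun i => gibbsCov (V i) (w i) x :=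
  integrable_finsetSum _ fun S _ => (integrable_det_sum_gibbsCov hV hw S).const_mul _

theorem mixedVolume_convexHull [NeZero k] (hV : ∀ i, (V i).Nonempty)
    (hw : ∀ i, ∀ p ∈ V i, 0 < w i p) :
    mixedVolume (fun i => convexHull ℝ (V i : Set (Fin k → ℝ))) =
      ∫ x, mixedDiscriminant fun i => gibbsCov (V i) (w i) x := by
  unfold mixedDiscriminant
  rw [mixedVolume_eq_sum, integral_finsetSum _ fun S _ =>
    (integrable_det_sum_gibbsCov hV hw S).const_mul _]
  refine Finset.sum_congr rfl fun S _ => ?_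
  rw [integral_const_mul, Fintype.card_fin, volume_sum_convexHull hV hw,
    integral_eq_lintegral_of_nonneg_ae _ (integrable_det_sum_gibbsCov hV hw S).aestronglyMeasurable]
  exact ae_of_all _ fun x =>
    (Matrix.posSemidef_sum _ fun i _ => posSemidef_gibbsCov (hw i) x).det_nonneg

theorem mixedDiscriminant_gibbsCov_nonneg (hw : ∀ i, ∀ p ∈ V i, 0 < w i p) (x : Fin k → ℝ) :
    0 ≤ mixedDiscriminant fun i => gibbsCov (V i) (w i) x :=
  mixedDiscriminant_nonneg fun i => posSemidef_gibbsCov (hw i) x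

theorem ofReal_mixedVolume_convexHull [NeZero k] (hV : ∀ i, (V i).Nonempty)
    (hw : ∀ i, ∀ p ∈ V i, 0 < w i p) :
    ENNReal.ofReal (mixedVolume fun i => convexHull ℝ (V i : Set (Fin k → ℝ))) =
      ∫⁻ x, ENNReal.ofReal (mixedDiscriminant fun i => gibbsCov (V i) (w i) x) := by
  rw [mixedVolume_convexHull hV hw, ofReal_integral_eq_lintegral_ofReal
    (integrable_mixedDiscriminant_gibbsCov hV hw)
    (ae_of_all _ (mixedDiscriminant_gibbsCov_nonneg hw))]

theorem mixedVolume_convexHull_nonneg [NeZero k] (hV : ∀ i, (V i).Nonempty) :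
    0 ≤ mixedVolume fun i => convexHull ℝ (V i : Set (Fin k → ℝ)) := by
  rw [mixedVolume_convexHull (w := 1) hV fun _ _ _ => one_pos]
  exact integral_nonneg (mixedDiscriminant_gibbsCov_nonneg fun _ _ _ => one_pos)

/-- Give the points outside `A i` weight `1 / (n + 1)`; as `n → ∞` the Gibbs covariances for `B i`
converge to those for `A i`, and Fatou's lemma compares the integrals. -/
theorem mixedVolume_convexHull_mono [NeZero k] {A B : Fin k → Finset (Fin k → ℝ)}
    (hA : ∀ i, (A i).Nonempty) (hAB : ∀ i, A i ⊆ B i) :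
    mixedVolume (fun i => convexHull ℝ (A i : Set (Fin k → ℝ))) ≤
      mixedVolume fun i => convexHull ℝ (B i : Set (Fin k → ℝ)) := by
  classical
  let w (n : ℕ) (i : Fin k) (p : Fin k → ℝ) : ℝ := if p ∈ A i then 1 else 1 / (n + 1)
  let u (i : Fin k) (p : Fin k → ℝ) : ℝ := if p ∈ A i then 1 else 0
  have hB i : (B i).Nonempty := (hA i).mono (hAB i)
  have hw n i p (_ : p ∈ B i) : 0 < w n i p := by
    simp only [w]; split_ifs <;> positivity
  have hu i p (hp : p ∈ A i) : 0 < u i p := by simp [u, hp]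
  have hwu i p : Filter.atTop.Tendsto (w · i p) (nhds (u i p)) := by
    by_cases hp : p ∈ A i
    · simp [w, u, hp]
    · simpa [w, u, hp] using tendsto_one_div_add_atTop_nhds_zero_nat (𝕜 := ℝ)
  have hlim x : Filter.atTop.Tendsto
      (fun n => mixedDiscriminant fun i => gibbsCov (B i) (w n i) x)
      (nhds (mixedDiscriminant fun i => gibbsCov (A i) (u i) x)) :=
    (continuous_mixedDiscriminant.tendsto _).comp <| tendsto_pi_nhds.2 fun i =>
      tendsto_gibbsCov (hAB i) (fun p _ => hwu i p) (hA i) (hu i) (fun p _ hp => by simp [u, hp]) x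
  refine (ENNReal.ofReal_le_ofReal_iff (mixedVolume_convexHull_nonneg hB)).1 ?_
  calc ENNReal.ofReal (mixedVolume fun i => convexHull ℝ (A i : Set (Fin k → ℝ)))
      = ∫⁻ x, ENNReal.ofReal (mixedDiscriminant fun i => gibbsCov (A i) (u i) x) :=
        ofReal_mixedVolume_convexHull hA hu
    _ = ∫⁻ x, Filter.atTop.liminf fun n =>
          ENNReal.ofReal (mixedDiscriminant fun i => gibbsCov (B i) (w n i) x) :=
        lintegral_congr fun x => (ENNReal.tendsto_ofReal (hlim x)).liminf_eq.symm
    _ ≤ Filter.atTop.liminf fun n =>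
          ∫⁻ x, ENNReal.ofReal (mixedDiscriminant fun i => gibbsCov (B i) (w n i) x) :=
        lintegral_liminf_le' fun n =>
          (integrable_mixedDiscriminant_gibbsCov hB (hw n)).aemeasurable.ennreal_ofReal
    _ = ENNReal.ofReal (mixedVolume fun i => convexHull ℝ (B i : Set (Fin k → ℝ))) := by
        simp only [← ofReal_mixedVolume_convexHull hB (hw _), Filter.liminf_const]

theorem mixedVolume_mono {P Q : Fin k → Set (Fin k → ℝ)} (hP : ∀ i, IsPolytope (P i))
    (hQ : ∀ i, IsPolytope (Q i)) (hne : ∀ i, (P i).Nonempty) (hPQ : ∀ i, P i ⊆ Q i) :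
    mixedVolume P ≤ mixedVolume Q := by
  classical
  obtain rfl | hk := eq_or_ne k 0
  · rw [Subsingleton.elim P Q]
  have : NeZero k := ⟨hk⟩
  choose A hA using hP
  choose B hB using hQ
  obtain rfl : P = fun i => convexHull ℝ (A i : Set (Fin k → ℝ)) := funext hA
  have hQ : Q = fun i => convexHull ℝ (A i ∪ B i : Finset (Fin k → ℝ)) := by
    ext1 i
    have hAQ : (A i : Set (Fin k → ℝ)) ⊆ Q i := (subset_convexHull ℝ _).trans (hPQ i)
    rw [hB i] at hAQ ⊢
    rw [Finset.coe_union]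
    exact (convexHull_mono Set.subset_union_right).antisymm
      (convexHull_min (Set.union_subset hAQ (subset_convexHull ℝ _)) (convex_convexHull ℝ _))
  rw [hQ]
  exact mixedVolume_convexHull_mono (fun i => by simpa using hne i)
    fun i => Finset.subset_union_left

end MixedVolume

section ExplicitMixedVolumes

theorem isPolytope_convexHull {E : Type*} [AddCommGroup E] [Module ℝ E] {s : Set E}
    (hs : s.Finite) : IsPolytope (convexHull ℝ s) :=
  ⟨hs.toFinset, by rw [hs.coe_toFinset]⟩

theorem isPolytope_segment {E : Type*} [AddCommGroup E] [Module ℝ E] (a b : E) :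
    IsPolytope (segment ℝ a b) := by
  rw [← convexHull_pair]
  exact isPolytope_convexHull (by simp)

theorem sum_smul_set_of_convex {E κ : Type*} [AddCommGroup E] [Module ℝ E] {K : Set E}
    (hK : Convex ℝ K) (hne : K.Nonempty) {c : κ → ℝ} (hc : ∀ i, 0 ≤ c i) (S : Finset κ) :
    ∑ i ∈ S, c i • K = (∑ i ∈ S, c i) • K := by
  classical
  induction S using Finset.induction_on with
  | empty => simp [Set.zero_smul_set hne]
  | insert i S hi ih =>
    rw [Finset.sum_insert hi, Finset.sum_insert hi, ih,
      hK.add_smul (hc i) (Finset.sum_nonneg fun j _ => hc j)]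

theorem volume_parallelepiped {ι : Type*} [Fintype ι] [DecidableEq ι] (v : ι → ι → ℝ) :
    volume (parallelepiped v) = ENNReal.ofReal |(Matrix.of v).det| := by
  rw [← addHaarMeasure_eq_volume_pi, ← Module.Basis.parallelepiped_basisFun,
    ← Module.Basis.addHaar_def, Measure.addHaar_parallelepiped, Pi.basisFun_det]
  rfl

variable {k : ℕ} [NeZero k]

theorem mixedVolume_smul {K : Set (Fin k → ℝ)} (hK : Convex ℝ K) (hne : K.Nonempty) {c : Fin k → ℝ}
    (hc : ∀ i, 0 ≤ c i) :
    mixedVolume (fun i => c i • K) = k.factorial * (∏ i, c i) * (volume K).toReal := by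
  have hvol (S : Finset (Fin k)) :
      (volume (∑ i ∈ S, c i • K)).toReal = (∑ i ∈ S, c i) ^ k * (volume K).toReal := by
    have hsum : 0 ≤ ∑ i ∈ S, c i := Finset.sum_nonneg fun i _ => hc i
    rw [sum_smul_set_of_convex hK hne hc, Measure.addHaar_smul_of_nonneg _ hsum,
      ENNReal.toReal_mul, Module.finrank_fin_fun, ENNReal.toReal_ofReal (pow_nonneg hsum k)]
  have hpol := sum_neg_one_pow_mul_sum_pow c
  rw [Fintype.card_fin] at hpol
  simp only [mixedVolume_eq_sum, hvol, ← mul_assoc, ← Finset.sum_mul, hpol]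

theorem mixedVolume_segment (v : Fin k → Fin k → ℝ) :
    mixedVolume (fun i => segment ℝ 0 (v i)) = |(Matrix.of v).det| := by
  have hvol (S : Finset (Fin k)) : (volume (∑ i ∈ S, segment ℝ 0 (v i))).toReal =
      |(Matrix.of fun i => if i ∈ S then v i else 0).det| := by
    have hsum : ∑ i ∈ S, segment ℝ 0 (v i) =
        parallelepiped fun i => if i ∈ S then v i else 0 := by
      rw [parallelepiped_eq_sum_segment, ← Finset.sum_subset (Finset.subset_univ S)
        fun i _ hi => by simp [hi, ← Set.singleton_zero]]
      exact Finset.sum_congr rfl fun i hi => by rw [if_pos hi]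
    rw [hsum, volume_parallelepiped, ENNReal.toReal_ofReal (abs_nonneg _)]
  rw [mixedVolume_eq_sum, Finset.sum_eq_single_of_mem Finset.univ (Finset.mem_univ _)]
  · simp only [hvol, Finset.card_univ, Fintype.card_fin, tsub_self, pow_zero, one_mul,
      Finset.mem_univ, if_true]
  · intro S _ hS
    obtain ⟨i, hi⟩ : ∃ i, i ∉ S := by simpa [Finset.eq_univ_iff_forall] using hS
    rw [hvol, Matrix.det_eq_zero_of_row_eq_zero i (by simp [hi]), abs_zero, mul_zero]

end ExplicitMixedVolumes

section CornerSimplex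

/-- The vertices of `cornerSimplex`: the origin and the standard basis vectors. -/
def cornerVertices (ι : Type*) [DecidableEq ι] : Set (ι → ℝ) :=
  insert 0 (Set.range fun i => Pi.single i 1)

/-- The simplex `{x | 0 ≤ x, ∑ xᵢ ≤ 1}`, encoded as a convex hull. -/
def cornerSimplex (ι : Type*) [DecidableEq ι] : Set (ι → ℝ) :=
  convexHull ℝ (cornerVertices ι)

/-- The reflection of `ι → ℝ` negating the coordinates selected by `s`. -/
def signFlip {ι : Type*} (s : ι → Bool) (x : ι → ℝ) : ι → ℝ :=
  fun j => if s j then -x j else x j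

variable {ι : Type*}

theorem zero_mem_cornerVertices [DecidableEq ι] : (0 : ι → ℝ) ∈ cornerVertices ι :=
  Set.mem_insert _ _

theorem single_mem_cornerVertices [DecidableEq ι] (i : ι) : Pi.single i 1 ∈ cornerVertices ι :=
  Set.mem_insert_of_mem _ (Set.mem_range_self i)

theorem finite_cornerVertices [Finite ι] [DecidableEq ι] : (cornerVertices ι).Finite :=
  (Set.finite_range _).insert _

theorem convex_cornerSimplex [DecidableEq ι] : Convex ℝ (cornerSimplex ι) :=
  convex_convexHull ℝ _

theorem zero_mem_cornerSimplex [DecidableEq ι] : (0 : ι → ℝ) ∈ cornerSimplex ι :=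
  subset_convexHull ℝ _ zero_mem_cornerVertices

theorem segment_single_subset_cornerSimplex [DecidableEq ι] (i : ι) :
    segment ℝ 0 (Pi.single i 1) ⊆ cornerSimplex ι :=
  convex_cornerSimplex.segment_subset zero_mem_cornerSimplex
    (subset_convexHull ℝ _ (single_mem_cornerVertices i))

theorem isPolytope_smul_cornerSimplex [Finite ι] [DecidableEq ι] (c : ℝ) :
    IsPolytope (c • cornerSimplex ι) := by
  rw [cornerSimplex, ← convexHull_smul]
  exact isPolytope_convexHull finite_cornerVertices.smul_set

theorem abs_eq_signFlip {s : ι → Bool} {x : ι → ℝ} {j : ι} (h : 0 < signFlip s x j) :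
    |x j| = signFlip s x j := by
  unfold signFlip at h ⊢
  split_ifs at h ⊢
  · exact abs_of_neg (neg_pos.mp h)
  · exact abs_of_pos h

theorem pairwise_disjoint_preimage_signFlip {T : Set (ι → ℝ)} (hT : ∀ x ∈ T, ∀ j, 0 < x j) :
    Pairwise (Function.onFun Disjoint fun s => signFlip s ⁻¹' T) := by
  refine fun s t hst => Set.disjoint_left.mpr fun x hs ht => hst (funext fun j => ?_)
  have hsj := hT _ hs j
  have htj := hT _ ht j
  unfold signFlip at hsj htj
  cases hs' : s j <;> cases ht' : t j <;> simp only [hs', ht'] at hsj htj ⊢ <;> grind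

variable [Fintype ι]

theorem measurePreserving_signFlip (s : ι → Bool) :
    MeasurePreserving (signFlip s) volume volume := by
  refine volume_preserving_pi (f := fun j y => if s j then -y else y) fun j => ?_
  cases s j
  · simpa using! MeasurePreserving.id (volume : Measure ℝ)
  · simpa using Measure.measurePreserving_neg (volume : Measure ℝ)

theorem volume_iUnion_preimage_signFlip {T : Set (ι → ℝ)} (hT : ∀ x ∈ T, ∀ j, 0 < x j)
    (hTm : MeasurableSet T) :
    volume (⋃ s, signFlip s ⁻¹' T) = 2 ^ Fintype.card ι * volume T := by
  rw [measure_iUnion (pairwise_disjoint_preimage_signFlip hT)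
    fun s => (measurePreserving_signFlip s).measurable hTm, tsum_fintype]
  simp [(measurePreserving_signFlip _).measure_preimage hTm.nullMeasurableSet]

theorem volume_sum_abs_le_one [Nonempty ι] : volume {x : ι → ℝ | ∑ j, |x j| ≤ 1} =
    ENNReal.ofReal (2 ^ Fintype.card ι / (Fintype.card ι).factorial) := by
  have h := volume_sum_rpow_le ι le_rfl 1
  norm_num [Real.Gamma_nat_eq_factorial, one_add_one_eq_two] at h
  exact h

variable [DecidableEq ι]

theorem cornerSimplex_subset : cornerSimplex ι ⊆ {x | 0 ≤ x ∧ ∑ j, x j ≤ 1} := by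
  have hsum : IsLinearMap ℝ fun x : ι → ℝ => ∑ j, x j :=
    ⟨fun x y => Finset.sum_add_distrib, fun c x => (Finset.mul_sum _ _ _).symm⟩
  refine convexHull_min ?_ ((convex_Ici 0).inter (convex_halfSpace_le hsum 1))
  rintro _ (rfl | ⟨i, rfl⟩)
  · simp
  · exact ⟨Pi.single_nonneg.mpr zero_le_one, by simp⟩

theorem interior_cornerSimplex_subset :
    interior (cornerSimplex ι) ⊆ {x | (∀ j, 0 < x j) ∧ ∑ j, x j ≤ 1} := by
  intro x hx
  have hsub : cornerSimplex ι ⊆ Set.univ.pi fun _ => Set.Ici 0 :=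
    fun y hy j _ => (cornerSimplex_subset hy).1 j
  have hpos := interior_mono hsub hx
  rw [interior_pi_set Set.finite_univ] at hpos
  exact ⟨fun j => by simpa using hpos j, (cornerSimplex_subset (interior_subset hx)).2⟩

/-- The `2 ^ card ι` reflections of the open corner simplex are disjoint subsets of the `ℓ¹` unit
ball. -/
theorem factorial_mul_volume_cornerSimplex_le [Nonempty ι] :
    (Fintype.card ι).factorial * (volume (cornerSimplex ι)).toReal ≤ 1 := by
  have hpos : ∀ x ∈ interior (cornerSimplex ι), ∀ j, 0 < x j :=
    fun x hx => (interior_cornerSimplex_subset hx).1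
  have hball : ⋃ s, signFlip s ⁻¹' interior (cornerSimplex ι) ⊆ {x | ∑ j, |x j| ≤ 1} := by
    refine Set.iUnion_subset fun s x hx => ?_
    rw [Set.mem_ofPred_eq, Finset.sum_congr rfl fun j _ => abs_eq_signFlip (hpos _ hx j)]
    exact (interior_cornerSimplex_subset hx).2
  have hvol : volume (interior (cornerSimplex ι)) = volume (cornerSimplex ι) :=
    measure_congr (interior_ae_eq_of_null_frontier
      (convex_cornerSimplex.addHaar_frontier volume))
  have hle := measure_mono (μ := volume) hball
  rw [volume_iUnion_preimage_signFlip hpos isOpen_interior.measurableSet, hvol,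
    volume_sum_abs_le_one] at hle
  have hreal := ENNReal.toReal_mono ENNReal.ofReal_ne_top hle
  rw [ENNReal.toReal_mul, ENNReal.toReal_ofReal (by positivity), ENNReal.toReal_pow,
    ENNReal.toReal_ofNat, div_eq_mul_one_div] at hreal
  rw [← le_div_iff₀' (by positivity)]
  exact le_of_mul_le_mul_left hreal (by positivity)

variable {k : ℕ} [NeZero k]

theorem mixedVolume_smul_cornerSimplex_le {c : Fin k → ℝ} (hc : ∀ i, 0 ≤ c i) :
    mixedVolume (fun i => c i • cornerSimplex (Fin k)) ≤ ∏ i, c i := by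
  have hfact := factorial_mul_volume_cornerSimplex_le (ι := Fin k)
  rw [Fintype.card_fin] at hfact
  calc mixedVolume (fun i => c i • cornerSimplex (Fin k))
      = (∏ i, c i) * (k.factorial * (volume (cornerSimplex (Fin k))).toReal) := by
        rw [mixedVolume_smul convex_cornerSimplex ⟨0, zero_mem_cornerSimplex⟩ hc]
        ring
    _ ≤ ∏ i, c i := mul_le_of_le_one_right (Finset.prod_nonneg fun i _ => hc i) hfact

theorem mixedVolume_segment_single {c : Fin k → ℝ} (hc : ∀ i, 0 ≤ c i)
    (σ : Equiv.Perm (Fin k)) :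
    mixedVolume (fun i => segment ℝ 0 (Pi.single (σ i) (c i))) = ∏ i, c i := by
  have hsub : (Matrix.of fun i => Pi.single (σ i) (c i)) =
      (Matrix.diagonal (c ∘ σ.symm)).submatrix σ (Equiv.refl _) := by
    ext i j
    simp [Pi.single_apply, Matrix.diagonal_apply, eq_comm]
  rw [mixedVolume_segment, hsub, Matrix.abs_det_submatrix_equiv_equiv, Matrix.det_diagonal,
    Function.comp_def, Equiv.prod_comp, abs_of_nonneg (Finset.prod_nonneg fun i _ => hc i)]

/-- Both bounds come from monotonicity: `P i` lies between `c i • [0, e_{σ i}]` and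
`c i • cornerSimplex`. -/
theorem mixedVolume_eq_prod {P : Fin k → Set (Fin k → ℝ)} {c : Fin k → ℝ}
    (σ : Equiv.Perm (Fin k)) (hc : ∀ i, 0 ≤ c i) (hP : ∀ i, IsPolytope (P i))
    (hlow : ∀ i, segment ℝ 0 (Pi.single (σ i) (c i)) ⊆ P i)
    (hup : ∀ i, P i ⊆ c i • cornerSimplex (Fin k)) :
    mixedVolume P = ∏ i, c i := by
  refine le_antisymm ?_ ?_
  · refine (mixedVolume_mono hP (fun i => isPolytope_smul_cornerSimplex (c i))
      (fun i => ⟨0, hlow i (left_mem_segment ℝ _ _)⟩) hup).trans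
      (mixedVolume_smul_cornerSimplex_le hc)
  · rw [← mixedVolume_segment_single hc σ]
    exact mixedVolume_mono (fun i => isPolytope_segment _ _) hP
      (fun i => ⟨0, left_mem_segment ℝ _ _⟩) hlow

end CornerSimplex

section LamanOrientation

variable {n : ℕ} {G : SimpleGraph (Fin n)} {a b : Fin n}

/-- Adjoin `a` and `b` to the endpoints of `F` and the edge `s(a, b)` to `F`: the Laman inequality
becomes the Hall condition for giving each vertex other than `a`, `b` two incoming edges. -/
theorem LamanGraph.card_le_two_mul_card_endpoints (hG : LamanGraph G) (hab : G.Adj a b)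
    {F : Finset (Sym2 (Fin n))} (hF : ∀ e ∈ F, e ∈ G.edgeSet ∧ e ≠ s(a, b)) :
    F.card ≤ 2 * (Finset.univ.filter fun v => (∃ e ∈ F, v ∈ e) ∧ v ≠ a ∧ v ≠ b).card := by
  set W := Finset.univ.filter fun v => (∃ e ∈ F, v ∈ e) ∧ v ≠ a ∧ v ≠ b with hW
  have hcard : (insert a (insert b W)).card = W.card + 2 := by
    rw [Finset.card_insert_of_notMem (by simp [hW, hab.ne]),
      Finset.card_insert_of_notMem (by simp [hW])]
  have hsub : insert s(a, b) F ⊆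
      G.edgeFinset.filter fun e => ∀ v ∈ e, v ∈ insert a (insert b W) := by
    intro e he
    rw [Finset.mem_filter, SimpleGraph.mem_edgeFinset]
    obtain rfl | he := Finset.mem_insert.1 he
    · exact ⟨hab, by simp⟩
    · refine ⟨(hF e he).1, fun v hv => ?_⟩
      simp only [hW, Finset.mem_insert, Finset.mem_filter_univ]
      grind
  have hle := (Finset.card_le_card hsub).trans (hG.2 _ (by omega))
  rw [Finset.card_insert_of_notMem fun h => (hF _ h).2 rfl] at hle
  omega

theorem LamanGraph.exists_injective_orientation (hG : LamanGraph G) (hab : G.Adj a b)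
    {κ : Type*} {E : κ → Sym2 (Fin n)} (hinj : Function.Injective E)
    (hE : ∀ i, E i ∈ G.edgeSet ∧ E i ≠ s(a, b)) :
    ∃ f : κ → Fin n × Bool, Function.Injective f ∧
      ∀ i, (f i).1 ∈ E i ∧ (f i).1 ≠ a ∧ (f i).1 ≠ b := by
  let heads (i : κ) : Finset (Fin n) := Finset.univ.filter fun v => v ∈ E i ∧ v ≠ a ∧ v ≠ b
  have hall (s : Finset κ) :
      s.card ≤ (s.biUnion fun i => heads i ×ˢ (Finset.univ : Finset Bool)).card := by
    have hcount := hG.card_le_two_mul_card_endpoints hab (F := s.image E) (by simp [hE])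
    rw [Finset.card_image_of_injective _ hinj] at hcount
    convert hcount using 1
    rw [mul_comm, ← Fintype.card_bool, ← Finset.card_univ, ← Finset.card_product]
    congr 1
    ext ⟨v, c⟩
    simp only [heads, Finset.mem_biUnion, Finset.mem_product, Finset.mem_filter_univ,
      Finset.mem_univ, and_true, Finset.exists_mem_image]
    grind
  obtain ⟨f, hf, hmem⟩ := (Finset.all_card_le_biUnion_card_iff_exists_injective _).1 hall
  exact ⟨f, hf, fun i => by simpa [heads] using hmem i⟩

end LamanOrientation

section EdgePolytope

/-- The position in `(x₁, y₁, …, x_n, y_n)` of the variable `xᵤ` (for `false`) or `yᵤ` (for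
`true`). -/
def varIdx {n : ℕ} (p : Fin n × Bool) : Fin (2 * n) :=
  if p.2 then yIdx p.1 else xIdx p.1

variable {n : ℕ}

theorem varIdx_injective : Function.Injective (varIdx (n := n)) := by
  rintro ⟨u, b⟩ ⟨v, c⟩ h
  rw [Fin.ext_iff] at h
  cases b <;> cases c <;> simp [varIdx, xIdx, yIdx, Fin.ext_iff] at h ⊢ <;> omega

theorem four_le_varIdx {p : Fin n × Bool} (h0 : (p.1 : ℕ) ≠ 0) (h1 : (p.1 : ℕ) ≠ 1) :
    4 ≤ (varIdx p : ℕ) := by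
  unfold varIdx xIdx yIdx
  split_ifs <;> grind

theorem exists_edgeNP_eq_convexHull (e : Sym2 (Fin n)) :
    ∃ V ⊆ cornerVertices (Fin (2 * n)) + cornerVertices (Fin (2 * n)),
      edgeNP e = convexHull ℝ V := by
  refine ⟨_, ?_, rfl⟩
  rintro _ ⟨u, v, -, rfl | rfl | rfl | rfl | rfl | rfl | rfl⟩
  · exact ⟨0, zero_mem_cornerVertices, 0, zero_mem_cornerVertices, add_zero 0⟩
  all_goals
    try rw [two_nsmul]
    exact Set.add_mem_add (single_mem_cornerVertices _) (single_mem_cornerVertices _)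

theorem isPolytope_edgeNP (e : Sym2 (Fin n)) : IsPolytope (edgeNP e) := by
  obtain ⟨V, hV, heq⟩ := exists_edgeNP_eq_convexHull e
  rw [heq]
  exact isPolytope_convexHull ((finite_cornerVertices.add finite_cornerVertices).subset hV)

theorem edgeNP_subset_two_smul_cornerSimplex (e : Sym2 (Fin n)) :
    edgeNP e ⊆ (2 : ℝ) • cornerSimplex (Fin (2 * n)) := by
  obtain ⟨V, hV, heq⟩ := exists_edgeNP_eq_convexHull e
  calc edgeNP e ⊆ cornerSimplex (Fin (2 * n)) + cornerSimplex (Fin (2 * n)) := by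
        rw [heq, cornerSimplex, ← convexHull_add]
        exact convexHull_mono hV
    _ = ((1 : ℝ) + 1) • cornerSimplex (Fin (2 * n)) := by
        rw [convex_cornerSimplex.add_smul zero_le_one zero_le_one, one_smul]
    _ = (2 : ℝ) • cornerSimplex (Fin (2 * n)) := by rw [one_add_one_eq_two]

theorem segment_single_subset_edgeNP {e : Sym2 (Fin n)} {p : Fin n × Bool} (hp : p.1 ∈ e) :
    segment ℝ 0 (Pi.single (varIdx p) 2) ⊆ edgeNP e := by
  obtain ⟨v, rfl⟩ := Sym2.mem_iff_exists.1 hp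
  have htwo (i : Fin (2 * n)) : (Pi.single i 2 : Fin (2 * n) → ℝ) = 2 • Pi.single i 1 := by
    rw [← Pi.single_smul]
    norm_num
  refine (convex_convexHull ℝ _).segment_subset (subset_convexHull ℝ _ ⟨p.1, v, rfl, .inl rfl⟩)
    (subset_convexHull ℝ _ ⟨p.1, v, rfl, ?_⟩)
  unfold varIdx
  split_ifs <;> simp [htwo]

end EdgePolytope

theorem exists_perm_extending {k m : ℕ} {f : Fin (k - m) → Fin k} (hf : Function.Injective f)
    (hm : ∀ j, m ≤ (f j : ℕ)) :
    ∃ σ : Equiv.Perm (Fin k), (∀ i : Fin k, (i : ℕ) < m → σ i = i) ∧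
      ∀ (i : Fin k) (_ : m ≤ (i : ℕ)), σ i = f ⟨i - m, by omega⟩ := by
  let g (i : Fin k) : Fin k := if h : (i : ℕ) < m then i else f ⟨i - m, by omega⟩
  have hg : Function.Injective g := by
    intro i j hij
    simp only [g] at hij
    split_ifs at hij with hi hj hj
    · exact hij
    · exact absurd (hij ▸ hi) (hm _).not_gt
    · exact absurd (hij ▸ hj) (hm _).not_gt
    · have := Fin.ext_iff.1 (hf hij)
      grind
  exact ⟨.ofBijective g (Finite.injective_iff_bijective.1 hg), fun i hi => dif_pos hi,
    fun i hi => dif_neg hi.not_gt⟩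

theorem prod_ite_val_lt_one_const {M : Type*} [CommMonoid M] (k m : ℕ) (c : M) :
    ∏ i : Fin k, (if (i : ℕ) < m then 1 else c) = c ^ (k - m) := by
  rw [Fin.prod_univ_eq_prod_range fun i => if i < m then 1 else c]
  have hIco : (Finset.range k).filter (fun i => ¬ i < m) = Finset.Ico m k := by
    ext i
    simp [and_comm]
  rw [Finset.prod_ite, Finset.prod_const_one, one_mul, Finset.prod_const, hIco, Nat.card_Ico]

/-- Theorem: General bound: for any Laman graph on `n` vertices
(with `[v₁,v₂] ∈ E`), the mixed volume of the Newton polytopes of the `2n`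
polynomials of the system `{x₁−c₁, y₁−c₂, x₂−(l₁₂−c₁), y₂−c₃}` together with
`{(xᵢ−xⱼ)² + (yᵢ−yⱼ)² − l²ᵢⱼ : [vᵢ,vⱼ] ∈ E ∖ {[v₁,v₂]}}` is exactly `4^{n−2}`.
The edges of `E ∖ {[v₁,v₂]}` are enumerated by `En`. -/
theorem laman_mixedVolume_initial_system {n : ℕ} (hn : 3 ≤ n)
    (G : SimpleGraph (Fin n)) (hLaman : LamanGraph G)
    (h01 : G.Adj ⟨0, by omega⟩ ⟨1, by omega⟩)
    (En : Fin (2 * n - 4) → Sym2 (Fin n)) (hinj : Function.Injective En)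
    (hrange : ∀ e, e ∈ Set.range En ↔
      e ∈ G.edgeSet ∧ e ≠ s(⟨0, by omega⟩, ⟨1, by omega⟩))
    (NP : Fin (2 * n) → Set (Fin (2 * n) → ℝ))
    (hNP : ∀ i : Fin (2 * n), NP i =
      if h : (i : ℕ) < 4 then
        segment ℝ 0 (Pi.single (⟨(i : ℕ), by have := i.isLt; omega⟩ : Fin (2 * n)) 1)
      else
        edgeNP (En ⟨(i : ℕ) - 4, by have := i.isLt; omega⟩)) :
    mixedVolume NP = (4 : ℝ) ^ (n - 2) := by
  have : NeZero (2 * n) := ⟨by omega⟩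
  obtain ⟨f, hf, hhead⟩ := hLaman.exists_injective_orientation h01 hinj
    fun i => (hrange _).1 ⟨i, rfl⟩
  obtain ⟨σ, hσ_lt, hσ_ge⟩ := exists_perm_extending (varIdx_injective.comp hf) fun i =>
    four_le_varIdx (Fin.val_ne_of_ne (hhead i).2.1) (Fin.val_ne_of_ne (hhead i).2.2)
  let c (i : Fin (2 * n)) : ℝ := if (i : ℕ) < 4 then 1 else 2
  have hc (i) : 0 ≤ c i := by positivity
  have hNP_bounds (i) : IsPolytope (NP i) ∧ segment ℝ 0 (Pi.single (σ i) (c i)) ⊆ NP i ∧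
      NP i ⊆ c i • cornerSimplex (Fin (2 * n)) := by
    by_cases hi : (i : ℕ) < 4
    · rw [hNP, dif_pos hi, hσ_lt i hi, show c i = 1 from if_pos hi, one_smul]
      exact ⟨isPolytope_segment _ _, subset_rfl, segment_single_subset_cornerSimplex i⟩
    · rw [hNP, dif_neg hi, hσ_ge i (not_lt.1 hi), show c i = 2 from if_neg hi]
      exact ⟨isPolytope_edgeNP _, segment_single_subset_edgeNP (hhead _).1,
        edgeNP_subset_two_smul_cornerSimplex _⟩
  calc mixedVolume NP = ∏ i, c i := mixedVolume_eq_prod σ hc (fun i => (hNP_bounds i).1)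
        (fun i => (hNP_bounds i).2.1) fun i => (hNP_bounds i).2.2
    _ = 2 ^ (2 * n - 4) := prod_ite_val_lt_one_const _ _ _
    _ = 4 ^ (n - 2) := by rw [show 2 * n - 4 = 2 * (n - 2) by omega, pow_mul]; norm_num
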